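/- Let N, d, H be positive integers. Define LN : ℝ^d → ℝ^d by LN(x) = x if ‖x‖₂ ≤ 1 and LN(x) = x/‖x‖₂ otherwise, applied row-wise to matrices. For X ∈ ℝ^{N×d} and weight matrices W_{Q,h} ∈ ℝ^{d×d_h}, W_{K,h} ∈ ℝ^{d×d_h}, W_{V,h} ∈ ℝ^{d×d} for h = 1,…,H, define the multi-head self-attention mha(X, {W_{Q,h}, W_{K,h}, W_{V,h}}_{h=1}^{H}) = ∑_{h=1}^{H} softmax(LN(X) W_{Q,h} (LN(X) W_{K,h})ᵀ) X W_{V,h} ∈ ℝ^{N×d}, where softmax is applied row-wise. Suppose X, X̃ ∈ ℝ^{N×d} satisfy ‖X‖_{2,∞} ≤ B_X and ‖X̃‖_{2,∞} ≤ B_X, and ‖W_{Q,h}‖_F ≤ B_Q, ‖W_{K,h}‖_F ≤ B_K, ‖W_{V,h}‖_F ≤ B_V for all h ∈ [H]. Then ‖mha(X, {W_{Q,h}, W_{K,h}, W_{V,h}}_{h=1}^{H}) − mha(X̃, {W_{Q,h}, W_{K,h}, W_{V,h}}_{h=1}^{H})‖_{2,∞} ≤ H·B_V·(1 + 4·B_X²·B_Q·B_K)·‖X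 − X̃‖_{2,∞}. -/

import Mathlib

open scoped BigOperators Matrix

/-- Euclidean (ℓ₂) norm of a finite real vector. -/
noncomputable def l2norm {n : ℕ} (v : Fin n → ℝ) : ℝ :=
  Real.sqrt (∑ i, v i ^ 2)

/-- Frobenius norm of a real matrix. -/
noncomputable def frobNorm {m n : ℕ} (A : Matrix (Fin m) (Fin n) ℝ) : ℝ :=
  Real.sqrt (∑ i, ∑ j, A i j ^ 2)

/-- ℓ_{2,∞} norm of a matrix: the maximum Euclidean norm of a row. -/
noncomputable def norm2inf {m n : ℕ} (A : Matrix (Fin m) (Fin n) ℝ) : ℝ :=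
  ⨆ i, l2norm (A i)

/-- Row-wise normalization: projection onto the closed Euclidean unit ball. -/
noncomputable def LN {n : ℕ} (x : Fin n → ℝ) : Fin n → ℝ :=
  if l2norm x ≤ 1 then x else (l2norm x)⁻¹ • x

/-- Multi-head self-attention
`mha(X, {W_{Q,h},W_{K,h},W_{V,h}}) = ∑_h softmax(LN(X)W_{Q,h} (LN(X)W_{K,h})ᵀ) X W_{V,h}`,
with `softmax` applied row-wise and `LN` applied row-wise to `X`. -/
noncomputable def mha {N d dh H : ℕ}
    (X : Matrix (Fin N) (Fin d) ℝ)
    (WQ WK : Fin H → Matrix (Fin d) (Fin dh) ℝ)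
    (WV : Fin H → Matrix (Fin d) (Fin d) ℝ) :
    Matrix (Fin N) (Fin d) ℝ :=
  ∑ h, Matrix.of fun i k =>
    ∑ j, (Real.exp (Matrix.vecMul (LN (X i)) (WQ h) ⬝ᵥ Matrix.vecMul (LN (X j)) (WK h)) /
          ∑ l, Real.exp (Matrix.vecMul (LN (X i)) (WQ h) ⬝ᵥ Matrix.vecMul (LN (X l)) (WK h))) *
      Matrix.vecMul (X j) (WV h) k

/-!
If `‖a - b‖_∞ ≤ ε`, then the log-probabilities of `softmax a` and `softmax b` differ by at most
`2ε`: `ε` through the logit and `ε` through the log-partition function. Since the logarithmic mean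
is at most the arithmetic mean, summing over the coordinates gives an `ℓ₁` distance of at most `2ε`.
The logits are bilinear in the rows of `LN X`, and `LN` is nonexpansive as a projection onto a
convex set, so they are `2 B_X B_Q B_K`-Lipschitz. In the difference of two softmax averages,
changing the averaged rows costs a factor `1` and changing the weights costs
`2 * (2 B_X B_Q B_K) * B_X`.
-/

section UnitBallProjection

variable {E : Type*} [SeminormedAddCommGroup E] [InnerProductSpace ℝ E]

/-- The metric projection of a real inner product space onto its closed unit ball: the
coordinate-free form of `LN`, with the case distinction absorbed into the maximum. -/
noncomputable def unitBallProj (x : E) : E := (max 1 ‖x‖)⁻¹ • x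

lemma unitBallProj_of_norm_le_one {x : E} (hx : ‖x‖ ≤ 1) : unitBallProj x = x := by
  rw [unitBallProj, max_eq_left hx, inv_one, one_smul]

lemma unitBallProj_of_one_le_norm {x : E} (hx : 1 ≤ ‖x‖) : unitBallProj x = ‖x‖⁻¹ • x := by
  rw [unitBallProj, max_eq_right hx]

lemma norm_unitBallProj (x : E) : ‖unitBallProj x‖ = (max 1 ‖x‖)⁻¹ * ‖x‖ := by
  rw [unitBallProj, norm_smul, Real.norm_of_nonneg (by positivity)]

lemma norm_unitBallProj_le_one (x : E) : ‖unitBallProj x‖ ≤ 1 := by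
  rw [norm_unitBallProj]
  exact inv_mul_le_one_of_le₀ (le_max_right _ _) (by positivity)

lemma norm_unitBallProj_le_norm (x : E) : ‖unitBallProj x‖ ≤ ‖x‖ := by
  rw [norm_unitBallProj]
  exact mul_le_of_le_one_left (norm_nonneg x) (inv_le_one_of_one_le₀ (le_max_left _ _))

lemma inner_sub_unitBallProj_nonneg (x : E) {z : E} (hz : ‖z‖ ≤ 1) :
    0 ≤ inner ℝ (x - unitBallProj x) (unitBallProj x - z) := by
  rcases le_total ‖x‖ 1 with hx | hx
  · simp only [unitBallProj_of_norm_le_one hx, sub_self, inner_zero_left, le_refl]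
  · have hx₀ : ‖x‖ ≠ 0 := (zero_lt_one.trans_le hx).ne'
    have hnorm : ‖unitBallProj x‖ = 1 := by
      rw [norm_unitBallProj, max_eq_right hx, inv_mul_cancel₀ hx₀]
    have hdiff : x - unitBallProj x = (‖x‖ - 1) • unitBallProj x := by
      rw [sub_smul, one_smul, unitBallProj_of_one_le_norm hx, smul_inv_smul₀ hx₀]
    have hinner : inner ℝ (unitBallProj x) z ≤ 1 := by
      calc inner ℝ (unitBallProj x) z ≤ ‖unitBallProj x‖ * ‖z‖ := real_inner_le_norm _ _
        _ ≤ 1 := by rwa [hnorm, one_mul]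
    rw [hdiff, real_inner_smul_left, inner_sub_right, real_inner_self_eq_norm_sq, hnorm, one_pow]
    exact mul_nonneg (sub_nonneg.2 hx) (sub_nonneg.2 hinner)

lemma norm_sub_le_of_inner_sub_nonneg {x y u v : E} (hu : 0 ≤ inner ℝ (x - u) (u - v))
    (hv : 0 ≤ inner ℝ (y - v) (v - u)) : ‖u - v‖ ≤ ‖x - y‖ := by
  have hsq : ‖u - v‖ ^ 2 ≤ ‖x - y‖ * ‖u - v‖ := by
    calc ‖u - v‖ ^ 2
        ≤ ‖u - v‖ ^ 2 + (inner ℝ (x - u) (u - v) + inner ℝ (y - v) (v - u)) :=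
          le_add_of_nonneg_right (add_nonneg hu hv)
      _ = inner ℝ (x - y) (u - v) := by
          rw [← real_inner_self_eq_norm_sq, ← neg_sub u v, inner_neg_right, ← sub_eq_add_neg,
            ← inner_sub_left, ← inner_add_left]
          congr 1
          abel
      _ ≤ ‖x - y‖ * ‖u - v‖ := real_inner_le_norm _ _
  nlinarith [norm_nonneg (u - v), norm_nonneg (x - y)]

lemma norm_unitBallProj_sub_le (x y : E) : ‖unitBallProj x - unitBallProj y‖ ≤ ‖x - y‖ :=
  norm_sub_le_of_inner_sub_nonneg
    (inner_sub_unitBallProj_nonneg x (norm_unitBallProj_le_one y))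
    (inner_sub_unitBallProj_nonneg y (norm_unitBallProj_le_one x))

end UnitBallProjection

section Softmax

-- The logarithmic mean `(p - q) / (log p - log q)` is at most the arithmetic mean.
lemma abs_sub_le_abs_log_sub_log_mul_half_add {p q : ℝ} (hp : 0 < p) (hq : 0 < q) :
    |p - q| ≤ |Real.log p - Real.log q| * ((p + q) / 2) := by
  wlog hqp : q ≤ p generalizing p q
  · rw [abs_sub_comm p, abs_sub_comm (Real.log p), add_comm p]
    exact this hq hp (le_of_not_ge hqp)
  have hlog : 2 * (p / q - 1) / (p / q - 1 + 2) ≤ Real.log p - Real.log q := by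
    calc 2 * (p / q - 1) / (p / q - 1 + 2)
        ≤ Real.log (1 + (p / q - 1)) :=
          Real.le_log_one_add_of_nonneg (sub_nonneg.2 ((one_le_div hq).2 hqp))
      _ = Real.log p - Real.log q := by rw [add_sub_cancel, Real.log_div hp.ne' hq.ne']
  have hratio : p - q = 2 * (p / q - 1) / (p / q - 1 + 2) * ((p + q) / 2) := by
    have hsum : p / q - 1 + 2 = (p + q) / q := by field_simp; ring
    rw [hsum]
    field_simp
  rw [abs_of_nonneg (sub_nonneg.2 hqp)]
  calc p - q = 2 * (p / q - 1) / (p / q - 1 + 2) * ((p + q) / 2) := hratio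
    _ ≤ |Real.log p - Real.log q| * ((p + q) / 2) := by
        gcongr
        exact hlog.trans (le_abs_self _)

variable {ι : Type*} [Fintype ι]

/-- The softmax weights of a finite family of logits, as used in each row of the attention
matrix. -/
noncomputable def softmax (z : ι → ℝ) (i : ι) : ℝ := Real.exp (z i) / ∑ j, Real.exp (z j)

/-- The log-partition function, which normalizes the logarithms of the softmax weights. -/
noncomputable def logSumExp (z : ι → ℝ) : ℝ := Real.log (∑ i, Real.exp (z i))

lemma sum_exp_pos [Nonempty ι] (z : ι → ℝ) : 0 < ∑ i, Real.exp (z i) :=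
  Finset.sum_pos (fun i _ => Real.exp_pos (z i)) Finset.univ_nonempty

lemma softmax_pos (z : ι → ℝ) (i : ι) : 0 < softmax z i :=
  have : Nonempty ι := ⟨i⟩
  div_pos (Real.exp_pos _) (sum_exp_pos z)

lemma sum_softmax [Nonempty ι] (z : ι → ℝ) : ∑ i, softmax z i = 1 := by
  simp only [softmax]
  rw [← Finset.sum_div, div_self (sum_exp_pos z).ne']

lemma log_softmax (z : ι → ℝ) (i : ι) : Real.log (softmax z i) = z i - logSumExp z := by
  have : Nonempty ι := ⟨i⟩
  rw [softmax, Real.log_div (Real.exp_ne_zero _) (sum_exp_pos z).ne', Real.log_exp, logSumExp]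

lemma logSumExp_sub_le_norm_sub [Nonempty ι] (a b : ι → ℝ) :
    logSumExp a - logSumExp b ≤ ‖a - b‖ := by
  have hsum : ∑ i, Real.exp (a i) ≤ Real.exp ‖a - b‖ * ∑ i, Real.exp (b i) := by
    rw [Finset.mul_sum]
    refine Finset.sum_le_sum fun i _ => ?_
    rw [← Real.exp_add, Real.exp_le_exp, ← sub_le_iff_le_add]
    exact (le_abs_self _).trans (norm_le_pi_norm (a - b) i)
  rw [sub_le_iff_le_add]
  calc logSumExp a ≤ Real.log (Real.exp ‖a - b‖ * ∑ i, Real.exp (b i)) :=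
        Real.log_le_log (sum_exp_pos a) hsum
    _ = ‖a - b‖ + logSumExp b := by
        rw [Real.log_mul (Real.exp_ne_zero _) (sum_exp_pos b).ne', Real.log_exp, logSumExp]

lemma abs_logSumExp_sub_le_norm_sub [Nonempty ι] (a b : ι → ℝ) :
    |logSumExp a - logSumExp b| ≤ ‖a - b‖ :=
  abs_sub_le_iff.2
    ⟨logSumExp_sub_le_norm_sub a b, norm_sub_rev a b ▸ logSumExp_sub_le_norm_sub b a⟩

lemma abs_log_softmax_sub_le (a b : ι → ℝ) (i : ι) :
    |Real.log (softmax a i) - Real.log (softmax b i)| ≤ 2 * ‖a - b‖ := by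
  have : Nonempty ι := ⟨i⟩
  rw [log_softmax, log_softmax, sub_sub_sub_comm, two_mul]
  exact (abs_sub _ _).trans
    (add_le_add (norm_le_pi_norm (a - b) i) (abs_logSumExp_sub_le_norm_sub a b))

lemma sum_abs_softmax_sub_le [Nonempty ι] (a b : ι → ℝ) :
    ∑ i, |softmax a i - softmax b i| ≤ 2 * ‖a - b‖ := by
  calc ∑ i, |softmax a i - softmax b i|
      ≤ ∑ i, 2 * ‖a - b‖ * ((softmax a i + softmax b i) / 2) := by
        refine Finset.sum_le_sum fun i _ => ?_
        have ha := softmax_pos a i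
        have hb := softmax_pos b i
        refine (abs_sub_le_abs_log_sub_log_mul_half_add ha hb).trans ?_
        gcongr
        exact abs_log_softmax_sub_le a b i
    _ = 2 * ‖a - b‖ := by
        rw [← Finset.mul_sum, ← Finset.sum_div, Finset.sum_add_distrib, sum_softmax, sum_softmax]
        ring

end Softmax

lemma norm_sum_smul_sub_sum_smul_le {ι E : Type*} [Fintype ι] [SeminormedAddCommGroup E]
    [NormedSpace ℝ E] {p : ι → ℝ} (q : ι → ℝ) {x y : ι → E} {B D : ℝ} (hp : ∀ i, 0 ≤ p i)
    (hp_sum : ∑ i, p i = 1) (hxy : ∀ i, ‖x i - y i‖ ≤ D) (hy : ∀ i, ‖y i‖ ≤ B) :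
    ‖∑ i, p i • x i - ∑ i, q i • y i‖ ≤ D + (∑ i, |p i - q i|) * B := by
  have hsplit : ∑ i, p i • x i - ∑ i, q i • y i =
      ∑ i, (p i • (x i - y i) + (p i - q i) • y i) := by
    rw [← Finset.sum_sub_distrib]
    exact Finset.sum_congr rfl fun i _ => by module
  rw [hsplit]
  calc ‖∑ i, (p i • (x i - y i) + (p i - q i) • y i)‖
      ≤ ∑ i, (p i * D + |p i - q i| * B) := by
        refine norm_sum_le_of_le _ fun i _ => norm_add_le_of_le ?_ ?_
        · rw [norm_smul, Real.norm_of_nonneg (hp i)]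
          exact mul_le_mul_of_nonneg_left (hxy i) (hp i)
        · rw [norm_smul, Real.norm_eq_abs]
          exact mul_le_mul_of_nonneg_left (hy i) (abs_nonneg _)
    _ = D + (∑ i, |p i - q i|) * B := by
        rw [Finset.sum_add_distrib, ← Finset.sum_mul, ← Finset.sum_mul, hp_sum, one_mul]

section MatrixNorms

variable {m n : ℕ}

lemma l2norm_eq_norm_toLp (v : Fin n → ℝ) : l2norm v = ‖WithLp.toLp 2 v‖ := by
  simp only [l2norm, EuclideanSpace.norm_eq, Real.norm_eq_abs, sq_abs]

lemma l2norm_nonneg (v : Fin n → ℝ) : 0 ≤ l2norm v := Real.sqrt_nonneg _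

lemma frobNorm_nonneg (A : Matrix (Fin m) (Fin n) ℝ) : 0 ≤ frobNorm A := Real.sqrt_nonneg _

lemma norm2inf_nonneg (A : Matrix (Fin m) (Fin n) ℝ) : 0 ≤ norm2inf A :=
  Real.iSup_nonneg fun i => l2norm_nonneg (A i)

lemma l2norm_row_le_norm2inf (A : Matrix (Fin m) (Fin n) ℝ) (i : Fin m) :
    l2norm (A i) ≤ norm2inf A :=
  le_ciSup (f := fun i => l2norm (A i)) (Set.finite_range _).bddAbove i

lemma l2norm_sum_le {ι : Type*} (s : Finset ι) (v : ι → Fin n → ℝ) :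
    l2norm (∑ i ∈ s, v i) ≤ ∑ i ∈ s, l2norm (v i) := by
  simp only [l2norm_eq_norm_toLp, WithLp.toLp_sum]
  exact norm_sum_le _ _

lemma abs_dotProduct_le_l2norm_mul_l2norm (v w : Fin n → ℝ) :
    |v ⬝ᵥ w| ≤ l2norm v * l2norm w := by
  rw [l2norm_eq_norm_toLp, l2norm_eq_norm_toLp, mul_comm]
  exact abs_real_inner_le_norm (WithLp.toLp 2 w) (WithLp.toLp 2 v)

lemma l2norm_vecMul_le (v : Fin m → ℝ) (A : Matrix (Fin m) (Fin n) ℝ) :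
    l2norm (v ᵥ* A) ≤ l2norm v * frobNorm A := by
  rw [l2norm, l2norm, frobNorm, ← Real.sqrt_mul (Finset.sum_nonneg fun i _ => sq_nonneg _),
    Finset.sum_comm, Finset.mul_sum]
  exact Real.sqrt_le_sqrt
    (Finset.sum_le_sum fun j _ => Finset.sum_mul_sq_le_sq_mul_sq Finset.univ v fun i => A i j)

lemma abs_vecMul_dotProduct_vecMul_le {k : ℕ} (Q : Matrix (Fin m) (Fin k) ℝ)
    (K : Matrix (Fin n) (Fin k) ℝ) (u : Fin m → ℝ) (v : Fin n → ℝ) :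
    |u ᵥ* Q ⬝ᵥ v ᵥ* K| ≤ frobNorm Q * frobNorm K * (l2norm u * l2norm v) := by
  calc |u ᵥ* Q ⬝ᵥ v ᵥ* K|
      ≤ l2norm (u ᵥ* Q) * l2norm (v ᵥ* K) := abs_dotProduct_le_l2norm_mul_l2norm _ _
    _ ≤ (l2norm u * frobNorm Q) * (l2norm v * frobNorm K) :=
        mul_le_mul (l2norm_vecMul_le u Q) (l2norm_vecMul_le v K) (l2norm_nonneg _)
          (mul_nonneg (l2norm_nonneg u) (frobNorm_nonneg Q))
    _ = frobNorm Q * frobNorm K * (l2norm u * l2norm v) := by ring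

lemma abs_vecMul_dotProduct_vecMul_sub_le {k : ℕ} (Q : Matrix (Fin m) (Fin k) ℝ)
    (K : Matrix (Fin n) (Fin k) ℝ) (u u' : Fin m → ℝ) (v v' : Fin n → ℝ) :
    |u ᵥ* Q ⬝ᵥ v ᵥ* K - u' ᵥ* Q ⬝ᵥ v' ᵥ* K| ≤
      frobNorm Q * frobNorm K * (l2norm (u - u') * l2norm v + l2norm u' * l2norm (v - v')) := by
  have hsplit : u ᵥ* Q ⬝ᵥ v ᵥ* K - u' ᵥ* Q ⬝ᵥ v' ᵥ* K =
      (u - u') ᵥ* Q ⬝ᵥ v ᵥ* K + u' ᵥ* Q ⬝ᵥ (v - v') ᵥ* K := by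
    simp only [Matrix.sub_vecMul, sub_dotProduct, dotProduct_sub, sub_add_sub_cancel]
  rw [hsplit, mul_add]
  exact (abs_add_le _ _).trans (add_le_add
    (abs_vecMul_dotProduct_vecMul_le Q K _ _) (abs_vecMul_dotProduct_vecMul_le Q K _ _))

lemma toLp_LN (x : Fin n → ℝ) : WithLp.toLp 2 (LN x) = unitBallProj (WithLp.toLp 2 x) := by
  unfold LN
  rw [l2norm_eq_norm_toLp]
  split_ifs with hx
  · rw [unitBallProj_of_norm_le_one hx]
  · rw [unitBallProj_of_one_le_norm (le_of_not_ge hx), WithLp.toLp_smul]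

lemma l2norm_LN_le_l2norm (x : Fin n → ℝ) : l2norm (LN x) ≤ l2norm x := by
  rw [l2norm_eq_norm_toLp, l2norm_eq_norm_toLp, toLp_LN]
  exact norm_unitBallProj_le_norm _

lemma l2norm_LN_sub_le (x y : Fin n → ℝ) : l2norm (LN x - LN y) ≤ l2norm (x - y) := by
  rw [l2norm_eq_norm_toLp, l2norm_eq_norm_toLp, WithLp.toLp_sub, WithLp.toLp_sub, toLp_LN, toLp_LN]
  exact norm_unitBallProj_sub_le _ _

end MatrixNorms

section Attention

variable {N d dh : ℕ}

/-- Row `i` of the matrix `LN(X) Q (LN(X) K)ᵀ` of attention logits. -/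
noncomputable def attentionLogits (X : Matrix (Fin N) (Fin d) ℝ)
    (Q K : Matrix (Fin d) (Fin dh) ℝ) (i j : Fin N) : ℝ :=
  LN (X i) ᵥ* Q ⬝ᵥ LN (X j) ᵥ* K

/-- Row `i` of `softmax(LN(X) Q (LN(X) K)ᵀ) X`: the output of one attention head before its value
matrix, which is linear and hence can be applied after averaging. -/
noncomputable def attentionAverage (X : Matrix (Fin N) (Fin d) ℝ)
    (Q K : Matrix (Fin d) (Fin dh) ℝ) (i : Fin N) : Fin d → ℝ :=
  ∑ j, softmax (attentionLogits X Q K i) j • X j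

lemma mha_row {H : ℕ} (X : Matrix (Fin N) (Fin d) ℝ) (WQ WK : Fin H → Matrix (Fin d) (Fin dh) ℝ)
    (WV : Fin H → Matrix (Fin d) (Fin d) ℝ) (i : Fin N) :
    mha X WQ WK WV i = ∑ h, attentionAverage X (WQ h) (WK h) i ᵥ* WV h := by
  ext k
  simp only [mha, attentionAverage, softmax, attentionLogits, Matrix.sum_apply, Matrix.of_apply,
    Finset.sum_apply, Matrix.sum_vecMul, Matrix.smul_vecMul, Pi.smul_apply, smul_eq_mul]

variable {X Y : Matrix (Fin N) (Fin d) ℝ} {B : ℝ}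

lemma norm_attentionLogits_sub_le (Q K : Matrix (Fin d) (Fin dh) ℝ) (hX : norm2inf X ≤ B)
    (hY : norm2inf Y ≤ B) (i : Fin N) :
    ‖attentionLogits X Q K i - attentionLogits Y Q K i‖ ≤
      2 * B * frobNorm Q * frobNorm K * norm2inf (X - Y) := by
  have hB : 0 ≤ B := (norm2inf_nonneg X).trans hX
  have hQ := frobNorm_nonneg Q
  have hK := frobNorm_nonneg K
  have hD := norm2inf_nonneg (X - Y)
  have hLN_sub (j : Fin N) : l2norm (LN (X j) - LN (Y j)) ≤ norm2inf (X - Y) :=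
    (l2norm_LN_sub_le _ _).trans (l2norm_row_le_norm2inf (X - Y) j)
  have hLN {Z : Matrix (Fin N) (Fin d) ℝ} (hZ : norm2inf Z ≤ B) (j : Fin N) :
      l2norm (LN (Z j)) ≤ B :=
    (l2norm_LN_le_l2norm _).trans ((l2norm_row_le_norm2inf Z j).trans hZ)
  refine (pi_norm_le_iff_of_nonneg (by positivity)).2 fun j => ?_
  calc |attentionLogits X Q K i j - attentionLogits Y Q K i j|
      ≤ frobNorm Q * frobNorm K * (l2norm (LN (X i) - LN (Y i)) * l2norm (LN (X j)) +
          l2norm (LN (Y i)) * l2norm (LN (X j) - LN (Y j))) :=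
        abs_vecMul_dotProduct_vecMul_sub_le Q K _ _ _ _
    _ ≤ frobNorm Q * frobNorm K * (norm2inf (X - Y) * B + B * norm2inf (X - Y)) := by
        gcongr
        exacts [l2norm_nonneg _, hLN_sub i, hLN hX j, l2norm_nonneg _, hLN hY i, hLN_sub j]
    _ = 2 * B * frobNorm Q * frobNorm K * norm2inf (X - Y) := by ring

lemma l2norm_attentionAverage_sub_le (Q K : Matrix (Fin d) (Fin dh) ℝ) (hX : norm2inf X ≤ B)
    (hY : norm2inf Y ≤ B) (i : Fin N) :
    l2norm (attentionAverage X Q K i - attentionAverage Y Q K i) ≤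
      (1 + 4 * B ^ 2 * frobNorm Q * frobNorm K) * norm2inf (X - Y) := by
  have : Nonempty (Fin N) := ⟨i⟩
  have hB : 0 ≤ B := (norm2inf_nonneg X).trans hX
  set p := softmax (attentionLogits X Q K i) with hp
  set q := softmax (attentionLogits Y Q K i) with hq
  have hrow_sub (j : Fin N) : ‖WithLp.toLp 2 (X j) - WithLp.toLp 2 (Y j)‖ ≤ norm2inf (X - Y) := by
    rw [← WithLp.toLp_sub, ← l2norm_eq_norm_toLp]
    exact l2norm_row_le_norm2inf (X - Y) j
  have hrow (j : Fin N) : ‖WithLp.toLp 2 (Y j)‖ ≤ B := by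
    rw [← l2norm_eq_norm_toLp]
    exact (l2norm_row_le_norm2inf Y j).trans hY
  have hweights : ∑ j, |p j - q j| ≤ 2 * (2 * B * frobNorm Q * frobNorm K * norm2inf (X - Y)) :=
    (sum_abs_softmax_sub_le _ _).trans
      (mul_le_mul_of_nonneg_left (norm_attentionLogits_sub_le Q K hX hY i) zero_le_two)
  calc l2norm (attentionAverage X Q K i - attentionAverage Y Q K i)
      = ‖∑ j, p j • WithLp.toLp 2 (X j) - ∑ j, q j • WithLp.toLp 2 (Y j)‖ := by
        simp only [l2norm_eq_norm_toLp, attentionAverage, WithLp.toLp_sub, WithLp.toLp_sum,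
          WithLp.toLp_smul, hp, hq]
    _ ≤ norm2inf (X - Y) + (∑ j, |p j - q j|) * B :=
        norm_sum_smul_sub_sum_smul_le q (fun j => (softmax_pos _ j).le) (sum_softmax _)
          hrow_sub hrow
    _ ≤ norm2inf (X - Y) + 2 * (2 * B * frobNorm Q * frobNorm K * norm2inf (X - Y)) * B := by
        gcongr
    _ = (1 + 4 * B ^ 2 * frobNorm Q * frobNorm K) * norm2inf (X - Y) := by ring

lemma l2norm_attentionAverage_vecMul_sub_le {Q K : Matrix (Fin d) (Fin dh) ℝ} {n : ℕ}
    {V : Matrix (Fin d) (Fin n) ℝ} {BQ BK BV : ℝ} (hX : norm2inf X ≤ B) (hY : norm2inf Y ≤ B)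
    (hQ : frobNorm Q ≤ BQ) (hK : frobNorm K ≤ BK) (hV : frobNorm V ≤ BV) (i : Fin N) :
    l2norm (attentionAverage X Q K i ᵥ* V - attentionAverage Y Q K i ᵥ* V) ≤
      BV * (1 + 4 * B ^ 2 * BQ * BK) * norm2inf (X - Y) := by
  have hK₀ := frobNorm_nonneg K
  have hV₀ := frobNorm_nonneg V
  have hBQ : 0 ≤ BQ := (frobNorm_nonneg Q).trans hQ
  have hBK : 0 ≤ BK := hK₀.trans hK
  have hD := norm2inf_nonneg (X - Y)
  rw [← Matrix.sub_vecMul]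
  calc l2norm ((attentionAverage X Q K i - attentionAverage Y Q K i) ᵥ* V)
      ≤ l2norm (attentionAverage X Q K i - attentionAverage Y Q K i) * frobNorm V :=
        l2norm_vecMul_le _ V
    _ ≤ (1 + 4 * B ^ 2 * frobNorm Q * frobNorm K) * norm2inf (X - Y) * frobNorm V :=
        mul_le_mul_of_nonneg_right (l2norm_attentionAverage_sub_le Q K hX hY i) hV₀
    _ ≤ (1 + 4 * B ^ 2 * BQ * BK) * norm2inf (X - Y) * BV := by
        gcongr
    _ = BV * (1 + 4 * B ^ 2 * BQ * BK) * norm2inf (X - Y) := by ring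

end Attention

/-- **Lipschitz property of multi-head self-attention in its input**
(Lemma I.8 of Zhang et al.). -/
theorem mha_lipschitz
    (N d dh H : ℕ) (hN : 0 < N) (hd : 0 < d) (hdh : 0 < dh) (hH : 0 < H)
    (X Xt : Matrix (Fin N) (Fin d) ℝ)
    (WQ WK : Fin H → Matrix (Fin d) (Fin dh) ℝ)
    (WV : Fin H → Matrix (Fin d) (Fin d) ℝ)
    (BX BQ BK BV : ℝ)
    (hX : norm2inf X ≤ BX) (hXt : norm2inf Xt ≤ BX)
    (hWQ : ∀ h, frobNorm (WQ h) ≤ BQ)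
    (hWK : ∀ h, frobNorm (WK h) ≤ BK)
    (hWV : ∀ h, frobNorm (WV h) ≤ BV) :
    norm2inf (mha X WQ WK WV - mha Xt WQ WK WV) ≤
      H * BV * (1 + 4 * BX ^ 2 * BQ * BK) * norm2inf (X - Xt) := by
  have : Nonempty (Fin N) := ⟨⟨0, hN⟩⟩
  refine ciSup_le fun i => ?_
  calc l2norm ((mha X WQ WK WV - mha Xt WQ WK WV) i)
      = l2norm (∑ h, (attentionAverage X (WQ h) (WK h) i ᵥ* WV h -
          attentionAverage Xt (WQ h) (WK h) i ᵥ* WV h)) := by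
        rw [Finset.sum_sub_distrib, ← mha_row, ← mha_row]
        rfl
    _ ≤ ∑ h, l2norm (attentionAverage X (WQ h) (WK h) i ᵥ* WV h -
          attentionAverage Xt (WQ h) (WK h) i ᵥ* WV h) := l2norm_sum_le _ _
    _ ≤ ∑ _h : Fin H, BV * (1 + 4 * BX ^ 2 * BQ * BK) * norm2inf (X - Xt) :=
        Finset.sum_le_sum fun h _ =>
          l2norm_attentionAverage_vecMul_sub_le hX hXt (hWQ h) (hWK h) (hWV h) i
    _ = H * BV * (1 + 4 * BX ^ 2 * BQ * BK) * norm2inf (X - Xt) := by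
        rw [Finset.sum_const, Finset.card_univ, Fintype.card_fin, nsmul_eq_mul]
        ring
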